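/- Let I=(G,ω,s,t,R) be a feasible s-t-RPP instance with s≠t and s,t non-adjacent in G=(V,E), and let I'=(G',ω',R') be the RPP instance obtained from I by adding the edge {s,t} with weight 2·ω(E) to both E and R. Then I' is feasible and the minimum weight of a feasible solution of I' equals the minimum weight of a feasible solution of I plus 2·ω(E). -/

import Mathlib

namespace HCPPFormal

variable {V : Type} [DecidableEq V]

/-- The degree of a vertex in a multigraph given as a multiset of edges
(loops count twice, multiplicities are counted). -/
def mDeg (M : Multiset (Sym2 V)) (v : V) : ℕ :=
  (M.map fun e => if e = Sym2.diag v then 2 else if v ∈ e then 1 else 0).sum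

/-- The vertex set of the multigraph induced by a multiset of edges. -/
def mVerts (M : Multiset (Sym2 V)) : Set V := {v | ∃ e ∈ M, v ∈ e}

/-- Adjacency in the multigraph induced by a multiset of edges. -/
def mAdj (M : Multiset (Sym2 V)) (a b : V) : Prop := s(a, b) ∈ M

/-- The multigraph induced by a multiset of edges is connected. -/
def mConnected (M : Multiset (Sym2 V)) : Prop :=
  ∀ u ∈ mVerts M, ∀ v ∈ mVerts M, Relation.ReflTransGen (mAdj M) u v

/-- The list of edges traversed by a walk, given as its list of vertices. -/
def walkEdgeList (w : List V) : List (Sym2 V) :=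
  (w.zip w.tail).map fun p => s(p.1, p.2)

/-- The multiset of edges traversed by a walk (with multiplicities). -/
def walkEdges (w : List V) : Multiset (Sym2 V) :=
  (walkEdgeList w : Multiset (Sym2 V))

/-- The weight of a multiset of edges. -/
def mWeight (ω : Sym2 V → ℕ) (M : Multiset (Sym2 V)) : ℕ := (M.map ω).sum

/-- The weight of a walk. -/
def wWeight (ω : Sym2 V → ℕ) (w : List V) : ℕ := mWeight ω (walkEdges w)

/-- A multiset `M` of edges is a perfect matching on the vertex set `U`:
it is a set of pairwise vertex-disjoint non-loop edges
whose endpoints are exactly the vertices of `U`. -/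
def IsPerfectMatchingOn (M : Multiset (Sym2 V)) (U : Set V) : Prop :=
  M.Nodup ∧ (∀ e ∈ M, ¬ e.IsDiag) ∧
  (∀ e ∈ M, ∀ e' ∈ M, e ≠ e' → ∀ v : V, v ∈ e → v ∉ e') ∧
  mVerts M = U


/-- The edge set of the complete graph on the (finite) vertex type `V`. -/
def completeEdges (V : Type) [Fintype V] [DecidableEq V] : Finset (Sym2 V) :=
  Finset.univ.filter fun e => ¬ e.IsDiag

/-- A feasible solution of the s-t-RPP instance `(G, ω, s, t, R)` with edge set `E`:
a walk from `s` to `t` in `G` traversing every edge of `R` at least once. -/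
def STSol (E R : Finset (Sym2 V)) (s t : V) (w : List V) : Prop :=
  w ≠ [] ∧ w.Chain' (fun a b => s(a, b) ∈ E) ∧
  w.head? = some s ∧ w.getLast? = some t ∧
  ∀ e ∈ R, e ∈ walkEdges w

/-- A feasible solution of the RPP instance with edge set `E` and required edges `R`:
a closed walk traversing every edge of `R` at least once. -/
def RPPSol (E R : Finset (Sym2 V)) (w : List V) : Prop :=
  w ≠ [] ∧ w.Chain' (fun a b => s(a, b) ∈ E) ∧
  w.head? = w.getLast? ∧
  ∀ e ∈ R, e ∈ walkEdges w

/-- The set `S` of those vertices outside `{s, t}` that are imbalanced in `⟨G⟩(R ∪ T)`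
together with those vertices of `{s, t}` that are balanced in `⟨G⟩(R ∪ T)`. -/
def stS (R T : Finset (Sym2 V)) (s t : V) : Set V :=
  {v | (v ≠ s ∧ v ≠ t ∧ ¬ Even (mDeg (R ∪ T).val v)) ∨
       ((v = s ∨ v = t) ∧ Even (mDeg (R ∪ T).val v))}

/-!
An `s`-`t` walk closes up to a solution of `I'` through the new edge, and a solution of `I'` that
traverses the new edge once opens up to an `s`-`t` walk there. A solution that traverses it at
least twice weighs at least `2 * (2 * ω(E))`, and so much pays for the new edge together with an
`s`-`t` walk traversing no edge more than twice. Such a walk exists: of three traversals of an edge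
two have the same direction, say `x → y`, and reversing the part from the first `y` to the second
`x` removes both of them while keeping the third.
-/

section

variable {α : Type}

/-- The darts of a walk: its edges in order, each with the direction in which it is traversed. -/
def walkDarts (w : List α) : List (α × α) := w.zip w.tail

lemma walkDarts_append {w₁ w₂ : List α} {x y : α} (hx : w₁.getLast? = some x)
    (hy : w₂.head? = some y) :
    walkDarts (w₁ ++ w₂) = walkDarts w₁ ++ (x, y) :: walkDarts w₂ := by
  obtain ⟨w₂, rfl⟩ := List.head?_eq_some_iff.1 hy
  induction w₁ with
  | nil => simp at hx
  | cons a w₁ ih =>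
    cases w₁ with
    | nil => simp_all [walkDarts]
    | cons b w₁ => simpa [walkDarts] using ih (by simpa using hx)

lemma exists_append_of_mem_walkDarts {w : List α} {x y : α} (h : (x, y) ∈ walkDarts w) :
    ∃ w₁ w₂, w = w₁ ++ w₂ ∧ w₁.getLast? = some x ∧ w₂.head? = some y ∧
      (x, y) ∉ walkDarts w₁ := by
  induction w with
  | nil => simp [walkDarts] at h
  | cons a w ih =>
    cases w with
    | nil => simp [walkDarts] at h
    | cons b w =>
      by_cases hab : (x, y) = (a, b)
      · obtain ⟨rfl, rfl⟩ := Prod.mk.inj hab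
        exact ⟨[x], y :: w, rfl, rfl, rfl, by simp [walkDarts]⟩
      · obtain ⟨w₁, w₂, hw, hx, hy, hnot⟩ := ih ((List.mem_cons.1 h).resolve_left hab)
        have hb : w₁.head? = some b := by
          cases w₁ <;> simp_all
        refine ⟨[a] ++ w₁, w₂, by simp [hw], by rw [List.getLast?_append, hx]; rfl, hy, ?_⟩
        rw [walkDarts_append rfl hb]
        exact List.not_mem_cons_of_ne_of_not_mem hab hnot

lemma exists_append_of_two_le_count_walkDarts [DecidableEq α] {w : List α} {x y : α}
    (h : 2 ≤ (walkDarts w).count (x, y)) :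
    ∃ w₁ p w₂, w = w₁ ++ (p ++ w₂) ∧ w₁.getLast? = some x ∧ p.head? = some y ∧
      p.getLast? = some x ∧ w₂.head? = some y := by
  obtain ⟨w₁, v, rfl, hx, hy, hnot⟩ :=
    exists_append_of_mem_walkDarts (List.count_pos_iff.1 (Nat.zero_lt_of_lt h))
  rw [walkDarts_append hx hy, List.count_append, List.count_eq_zero_of_not_mem hnot,
    List.count_cons_self] at h
  have hv : (x, y) ∈ walkDarts v := List.count_pos_iff.1 (by omega)
  obtain ⟨p, w₂, rfl, hpx, hy₂, -⟩ := exists_append_of_mem_walkDarts hv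
  refine ⟨w₁, p, w₂, rfl, hx, ?_, hpx, hy₂⟩
  cases p <;> simp_all

lemma walkEdges_eq_map_walkDarts (w : List α) :
    walkEdges w = ((walkDarts w).map fun p => s(p.1, p.2) : List (Sym2 α)) := rfl

lemma walkEdges_append {w₁ w₂ : List α} {x y : α} (hx : w₁.getLast? = some x)
    (hy : w₂.head? = some y) :
    walkEdges (w₁ ++ w₂) = s(x, y) ::ₘ (walkEdges w₁ + walkEdges w₂) := by
  simp [walkEdges_eq_map_walkDarts, walkDarts_append hx hy]

lemma walkEdges_cons_of_head?_eq_some {w : List α} {a b : α} (h : w.head? = some b) :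
    walkEdges (a :: w) = s(a, b) ::ₘ walkEdges w := by
  simpa [walkEdges, walkEdgeList] using walkEdges_append (w₁ := [a]) rfl h

lemma walkEdges_reverse (w : List α) : walkEdges w.reverse = walkEdges w := by
  induction w with
  | nil => rfl
  | cons a w ih =>
    cases w with
    | nil => rfl
    | cons b w =>
      rw [List.reverse_cons, walkEdges_append (x := b) (y := a) (by simp) rfl, ih,
        walkEdges_cons_of_head?_eq_some (w := b :: w) rfl, Sym2.eq_swap]
      simp [walkEdges, walkEdgeList]

lemma walkEdges_append_tail {w₁ w₂ : List α} (h : w₁.getLast? = w₂.head?) :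
    walkEdges (w₁ ++ w₂.tail) = walkEdges w₁ + walkEdges w₂ := by
  match w₂ with
  | [] => simp [walkEdges, walkEdgeList]
  | [a] => simp [walkEdges, walkEdgeList]
  | a :: b :: w₂ =>
    rw [List.tail_cons, walkEdges_append h rfl,
      walkEdges_cons_of_head?_eq_some (w := b :: w₂) rfl, Multiset.add_cons]

lemma head?_append_tail {w₁ w₂ : List α} (h : w₁.getLast? = w₂.head?) :
    (w₁ ++ w₂.tail).head? = w₁.head? := by
  cases w₁ <;> cases w₂ <;> simp_all

lemma getLast?_append_tail {w₁ w₂ : List α} (h : w₁.getLast? = w₂.head?) :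
    (w₁ ++ w₂.tail).getLast? = w₂.getLast? := by
  match w₂ with
  | [] => simp_all
  | [a] => simp_all
  | a :: b :: w₂ => simp [List.getLast?_append, List.getLast?_cons]

lemma isChain_iff_forall_mem_walkEdges {p : Sym2 α → Prop} {w : List α} :
    w.IsChain (fun a b => p s(a, b)) ↔ ∀ e ∈ walkEdges w, p e := by
  induction w with
  | nil => simp [walkEdges, walkEdgeList]
  | cons a w ih =>
    cases w with
    | nil => simp [walkEdges, walkEdgeList]
    | cons b w => simp [walkEdges_cons_of_head?_eq_some (a := a) (w := b :: w) rfl, ih]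

lemma exists_walkEdges_eq_cons_of_closed {W : List α} {x y : α} (hclosed : W.head? = W.getLast?)
    (h : s(x, y) ∈ walkEdges W) :
    ∃ w : List α, w.head? = some x ∧ w.getLast? = some y ∧
      walkEdges W = s(x, y) ::ₘ walkEdges w := by
  have open_at_dart {a b : α} (hab : (a, b) ∈ walkDarts W) :
      ∃ w : List α, w.head? = some b ∧ w.getLast? = some a ∧
        walkEdges W = s(a, b) ::ₘ walkEdges w := by
    obtain ⟨w₁, w₂, rfl, ha, hb, -⟩ := exists_append_of_mem_walkDarts hab
    have hne₁ : w₁ ≠ [] := by rintro rfl; simp at ha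
    have hne₂ : w₂ ≠ [] := by rintro rfl; simp at hb
    have hglue : w₂.getLast? = w₁.head? := by
      rwa [List.head?_append_of_ne_nil _ hne₁, List.getLast?_append_of_ne_nil _ hne₂,
        eq_comm] at hclosed
    exact ⟨w₂ ++ w₁.tail, (head?_append_tail hglue).trans hb,
      (getLast?_append_tail hglue).trans ha,
      by rw [walkEdges_append ha hb, walkEdges_append_tail hglue, add_comm]⟩
  obtain ⟨⟨a, b⟩, hab, he⟩ := List.mem_map.1 h
  obtain ⟨w, hb, ha, hw⟩ := open_at_dart hab
  rcases Sym2.eq_iff.1 he with ⟨rfl, rfl⟩ | ⟨rfl, rfl⟩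
  · exact ⟨w.reverse, by simpa using ha, by simpa using hb, by rw [walkEdges_reverse, hw]⟩
  · exact ⟨w, hb, ha, by rw [hw, Sym2.eq_swap]⟩

lemma exists_walkEdges_eq_cons_cons_of_two_le_count_walkDarts [DecidableEq α] {w : List α}
    {x y : α} (h : 2 ≤ (walkDarts w).count (x, y)) :
    ∃ w' : List α, w'.head? = w.head? ∧ w'.getLast? = w.getLast? ∧
      walkEdges w = s(x, y) ::ₘ s(x, y) ::ₘ walkEdges w' := by
  obtain ⟨w₁, p, w₂, rfl, hx, hpy, hpx, hy⟩ := exists_append_of_two_le_count_walkDarts h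
  have hglue : p.reverse.getLast? = w₂.head? := by simp [hpy, hy]
  have hglue₁ : w₁.getLast? = (p.reverse ++ w₂.tail).head? := by
    rw [head?_append_tail hglue]; simp [hx, hpx]
  refine ⟨w₁ ++ (p.reverse ++ w₂.tail).tail, ?_, ?_, ?_⟩
  · have hne₁ : w₁ ≠ [] := by rintro rfl; simp at hx
    rw [head?_append_tail hglue₁, List.head?_append_of_ne_nil _ hne₁]
  · have hne₂ : w₂ ≠ [] := by rintro rfl; simp at hy
    rw [getLast?_append_tail hglue₁, getLast?_append_tail hglue, ← List.append_assoc,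
      List.getLast?_append_of_ne_nil _ hne₂]
  · rw [walkEdges_append_tail hglue₁, walkEdges_append_tail hglue, walkEdges_reverse,
      walkEdges_append hx (y := y) (by simp [hpy]), walkEdges_append hpx hy, Multiset.add_cons]

lemma count_walkEdges_le [DecidableEq α] (w : List α) (x y : α) :
    (walkEdges w).count s(x, y) ≤ (walkDarts w).count (x, y) + (walkDarts w).count (y, x) := by
  rw [walkEdges_eq_map_walkDarts, Multiset.coe_count]
  induction walkDarts w with
  | nil => simp
  | cons d l ih =>
    simp only [List.map_cons, List.count_cons, beq_iff_eq, Sym2.eq_iff, Prod.ext_iff]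
    grind

lemma exists_walkEdges_eq_cons_cons_of_three_le_count [DecidableEq α] {w : List α} {e : Sym2 α}
    (h : 3 ≤ (walkEdges w).count e) :
    ∃ w' : List α, w'.head? = w.head? ∧ w'.getLast? = w.getLast? ∧
      walkEdges w = e ::ₘ e ::ₘ walkEdges w' := by
  induction e using Sym2.ind with | _ x y =>
  have hcount := count_walkEdges_le w x y
  obtain hxy | hyx : 2 ≤ (walkDarts w).count (x, y) ∨ 2 ≤ (walkDarts w).count (y, x) := by omega
  · exact exists_walkEdges_eq_cons_cons_of_two_le_count_walkDarts hxy
  · rw [Sym2.eq_swap]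
    exact exists_walkEdges_eq_cons_cons_of_two_le_count_walkDarts hyx

lemma exists_walk_count_walkEdges_le_two [DecidableEq α] (w : List α) :
    ∃ w' : List α, w'.head? = w.head? ∧ w'.getLast? = w.getLast? ∧
      (∀ e, e ∈ walkEdges w' ↔ e ∈ walkEdges w) ∧ ∀ e, (walkEdges w').count e ≤ 2 := by
  induction hn : (walkEdges w).card using Nat.strong_induction_on generalizing w with | _ n ih =>
  by_cases hle : ∀ e, (walkEdges w).count e ≤ 2
  · exact ⟨w, rfl, rfl, fun _ => Iff.rfl, hle⟩
  push Not at hle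
  obtain ⟨e, he⟩ := hle
  obtain ⟨v, hhead, hlast, hv⟩ := exists_walkEdges_eq_cons_cons_of_three_le_count he
  have hev : e ∈ walkEdges v := by
    rw [hv] at he
    exact Multiset.count_pos.1 (by simpa using he)
  obtain ⟨w', hhead', hlast', hmem, hcount⟩ := ih _ (by simp [← hn, hv]) v rfl
  refine ⟨w', hhead'.trans hhead, hlast'.trans hlast, fun f => ?_, hcount⟩
  rw [hmem, hv]
  grind

lemma mWeight_cons (ω : Sym2 α → ℕ) (e : Sym2 α) (M : Multiset (Sym2 α)) :
    mWeight ω (e ::ₘ M) = ω e + mWeight ω M := by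
  simp [mWeight]

lemma le_mWeight_of_mem (ω : Sym2 α → ℕ) {e : Sym2 α} {M : Multiset (Sym2 α)} (h : e ∈ M) :
    ω e ≤ mWeight ω M :=
  Multiset.le_sum_of_mem (Multiset.mem_map_of_mem ω h)

lemma mWeight_update_of_notMem [DecidableEq α] (ω : Sym2 α → ℕ) {e : Sym2 α} (c : ℕ)
    {M : Multiset (Sym2 α)} (h : e ∉ M) : mWeight (Function.update ω e c) M = mWeight ω M := by
  unfold mWeight
  rw [Multiset.map_congr rfl fun f hf => Function.update_of_ne (ne_of_mem_of_not_mem hf h) c ω]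

lemma mWeight_le_mul_sum_of_count_le [DecidableEq α] (ω : Sym2 α → ℕ) {M : Multiset (Sym2 α)}
    {E : Finset (Sym2 α)} {k : ℕ} (hM : ∀ e ∈ M, e ∈ E) (hk : ∀ e, M.count e ≤ k) :
    mWeight ω M ≤ k * ∑ e ∈ E, ω e := by
  have hsub : M.toFinset ⊆ E := fun e he => hM e (Multiset.mem_toFinset.1 he)
  calc mWeight ω M = ∑ e ∈ M.toFinset, M.count e * ω e := Finset.sum_multiset_map_count M ω
    _ ≤ ∑ e ∈ M.toFinset, k * ω e := by gcongr with e; exact hk e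
    _ ≤ ∑ e ∈ E, k * ω e := by gcongr
    _ = k * ∑ e ∈ E, ω e := (Finset.mul_sum ..).symm

lemma stSol_iff {E R : Finset (Sym2 α)} {s t : α} {w : List α} :
    STSol E R s t w ↔ w.head? = some s ∧ w.getLast? = some t ∧
      (∀ e ∈ walkEdges w, e ∈ E) ∧ ∀ e ∈ R, e ∈ walkEdges w := by
  have hne : w.head? = some s → w ≠ [] := by rintro h rfl; simp at h
  have hchain := isChain_iff_forall_mem_walkEdges (p := (· ∈ E)) (w := w)
  unfold STSol
  tauto

lemma rppSol_iff {E R : Finset (Sym2 α)} {w : List α} :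
    RPPSol E R w ↔ w ≠ [] ∧ w.head? = w.getLast? ∧
      (∀ e ∈ walkEdges w, e ∈ E) ∧ ∀ e ∈ R, e ∈ walkEdges w := by
  have hchain := isChain_iff_forall_mem_walkEdges (p := (· ∈ E)) (w := w)
  unfold RPPSol
  tauto

variable {E R : Finset (Sym2 α)} {s t : α}

lemma STSol.exists_wWeight_le (ω : Sym2 α → ℕ) {w : List α} (hw : STSol E R s t w) :
    ∃ w', STSol E R s t w' ∧ wWeight ω w' ≤ 2 * ∑ e ∈ E, ω e := by
  classical
  obtain ⟨hs, ht, hE, hR⟩ := stSol_iff.1 hw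
  obtain ⟨w', hhead, hlast, hmem, hcount⟩ := exists_walk_count_walkEdges_le_two w
  have hE' : ∀ e ∈ walkEdges w', e ∈ E := fun e he => hE e ((hmem e).1 he)
  exact ⟨w', stSol_iff.2 ⟨hhead.trans hs, hlast.trans ht, hE', fun e he => (hmem e).2 (hR e he)⟩,
    mWeight_le_mul_sum_of_count_le ω hE' hcount⟩

lemma STSol.walkEdges_cons {w : List α} (hw : STSol E R s t w) :
    walkEdges (t :: w) = s(s, t) ::ₘ walkEdges w := by
  rw [walkEdges_cons_of_head?_eq_some (stSol_iff.1 hw).1, Sym2.eq_swap]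

variable [DecidableEq α]

lemma STSol.rppSol_cons {w : List α} (hw : STSol E R s t w) :
    RPPSol (insert s(s, t) E) (insert s(s, t) R) (t :: w) := by
  obtain ⟨-, ht, hE, hR⟩ := stSol_iff.1 hw
  refine rppSol_iff.2 ⟨by simp, by simp [List.getLast?_cons, ht], ?_, ?_⟩ <;>
    simp only [hw.walkEdges_cons, Multiset.mem_cons, Finset.mem_insert]
  · exact fun e he => he.imp_right (hE e)
  · exact fun e he => he.imp_right (hR e)

lemma STSol.wWeight_update_cons {w : List α} (ω : Sym2 α → ℕ) (c : ℕ) (hadj : s(s, t) ∉ E)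
    (hw : STSol E R s t w) :
    wWeight (Function.update ω s(s, t) c) (t :: w) = wWeight ω w + c := by
  obtain ⟨-, -, hE, -⟩ := stSol_iff.1 hw
  rw [wWeight, hw.walkEdges_cons, mWeight_cons, Function.update_self,
    mWeight_update_of_notMem ω c (mt (hE _) hadj), add_comm, wWeight]

lemma RPPSol.exists_stSol_wWeight_add_le {W v : List α} {ω : Sym2 α → ℕ} {c : ℕ}
    (hW : RPPSol (insert s(s, t) E) (insert s(s, t) R) W) (hadj : s(s, t) ∉ E)
    (hv : STSol E R s t v) (hc : 2 * ∑ e ∈ E, ω e ≤ c) :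
    ∃ w, STSol E R s t w ∧ wWeight ω w + c ≤ wWeight (Function.update ω s(s, t) c) W := by
  obtain ⟨-, hclosed, hE, hR⟩ := rppSol_iff.1 hW
  obtain ⟨w, hs, ht, hw⟩ :=
    exists_walkEdges_eq_cons_of_closed hclosed (hR _ (Finset.mem_insert_self _ _))
  have hweight : wWeight (Function.update ω s(s, t) c) W =
      c + mWeight (Function.update ω s(s, t) c) (walkEdges w) := by
    rw [wWeight, hw, mWeight_cons, Function.update_self]
  by_cases hmem : s(s, t) ∈ walkEdges w
  · obtain ⟨w', hw', hle⟩ := hv.exists_wWeight_le ω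
    have hcw := le_mWeight_of_mem (Function.update ω s(s, t) c) hmem
    rw [Function.update_self] at hcw
    exact ⟨w', hw', by omega⟩
  · obtain ⟨-, -, hvE, hvR⟩ := stSol_iff.1 hv
    simp only [hw, Multiset.mem_cons, Finset.mem_insert] at hE hR
    refine ⟨w, stSol_iff.2 ⟨hs, ht, fun e he => ?_, fun e he => ?_⟩, ?_⟩
    · exact (hE e (.inr he)).resolve_left (ne_of_mem_of_not_mem he hmem)
    · exact (hR e (.inr he)).resolve_left (ne_of_mem_of_not_mem (hvE e (hvR e he)) hadj)
    · rw [hweight, mWeight_update_of_notMem ω c hmem, add_comm, wWeight]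

theorem reduction_to_rpp_value_general {ω : Sym2 α → ℕ} {c : ℕ} (hadj : s(s, t) ∉ E)
    (hfeas : ∃ w, STSol E R s t w) (hc : 2 * ∑ e ∈ E, ω e ≤ c) :
    (∃ W, RPPSol (insert s(s, t) E) (insert s(s, t) R) W) ∧
    sInf {k | ∃ W, RPPSol (insert s(s, t) E) (insert s(s, t) R) W ∧
        wWeight (Function.update ω s(s, t) c) W = k} =
      sInf {k | ∃ w, STSol E R s t w ∧ wWeight ω w = k} + c := by
  obtain ⟨v, hv⟩ := hfeas
  refine ⟨⟨t :: v, hv.rppSol_cons⟩, IsLeast.csInf_eq ⟨?_, ?_⟩⟩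
  · obtain ⟨w, hw, hmin⟩ := Nat.sInf_mem (s := {k | ∃ w, STSol E R s t w ∧ wWeight ω w = k})
      ⟨_, v, hv, rfl⟩
    exact ⟨t :: w, hw.rppSol_cons, by rw [hw.wWeight_update_cons ω c hadj, hmin]⟩
  · rintro _ ⟨W, hW, rfl⟩
    obtain ⟨w, hw, hle⟩ := hW.exists_stSol_wWeight_add_le hadj hv hc
    have hmin : sInf {k | ∃ w, STSol E R s t w ∧ wWeight ω w = k} ≤ wWeight ω w :=
      Nat.sInf_le ⟨w, hw, rfl⟩
    exact (Nat.add_le_add_right hmin c).trans hle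

end

/-- Let `I = (G, ω, s, t, R)` be a feasible s-t-RPP instance with `s ≠ t` and `s, t`
non-adjacent in `G = (V, E)`, and let `I' = (G', ω', R')` be the RPP instance obtained
from `I` by adding the edge `{s, t}` with weight `2·ω(E)` to both `E` and `R`. Then `I'`
is feasible and the minimum weight of a feasible solution of `I'` equals the minimum
weight of a feasible solution of `I` plus `2·ω(E)`. -/
theorem reduction_to_rpp_value {V : Type} [DecidableEq V]
    (E R : Finset (Sym2 V)) (ω : Sym2 V → ℕ) (s t : V) (hst : s ≠ t)
    (hd : ∀ e ∈ E, ¬ e.IsDiag) (hRE : R ⊆ E) (hadj : s(s, t) ∉ E)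
    (hfeas : ∃ w : List V, STSol E R s t w)
    (ω' : Sym2 V → ℕ)
    (hω' : ω' = fun e => if e = s(s, t) then 2 * ∑ x ∈ E, ω x else ω e) :
    (∃ W : List V, RPPSol (insert s(s, t) E) (insert s(s, t) R) W) ∧
    sInf {c : ℕ | ∃ W : List V,
        RPPSol (insert s(s, t) E) (insert s(s, t) R) W ∧ wWeight ω' W = c} =
      sInf {c : ℕ | ∃ w : List V, STSol E R s t w ∧ wWeight ω w = c} +
        2 * ∑ x ∈ E, ω x := by
  obtain rfl : ω' = Function.update ω s(s, t) (2 * ∑ x ∈ E, ω x) := by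
    rw [hω']; funext e; rw [Function.update_apply]
  exact reduction_to_rpp_value_general hadj hfeas le_rfl

end HCPPFormal
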